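/- arXiv:1603.08074 — 2 statements merged into one kernel-verified Lean document; each statement's English description precedes it below -/
import Mathlib

section
/- Let a_0, a_1 be positive integers, a_2 = −(a_0 + a_1), and W(z) = (−1)^{a_0+a_1} · z^{a_0} · (z+1)^{a_2} on ℂ \ {0, −1} (zpow). Set q = a_0^{a_0} · a_1^{a_1} · a_2^{a_2} ∈ ℂ (zpow). Then for every w ∈ ℂ with w ≠ 0: if w ≠ q, the fiber {z ∈ ℂ \ {0, −1} : W(z) = w} is a finite set with exactly a_0 + a_1 elements; and the fiber {z ∈ ℂ \ {0, −1} : W(z) = q} is a finite set with exactly a_0 + a_1 − 1 elements. -/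
/-!
After clearing denominators, the fiber of `W` over `w ≠ 0` is the root set of
`P = w (-(X + 1)) ^ (a₀ + a₁) - X ^ a₀`, a polynomial of degree `a₀ + a₁`. It satisfies
`X (X + 1) P' = (a₀ + a₁) X P + a₁ X ^ a₀ (X - a₀ / a₁)`, so a root of `P` is simple unless it is
the critical point `a₀ / a₁` of `W`, where it is exactly double. As `W (a₀ / a₁) = q`, a root is
lost precisely when `w = q`.
-/

section RootCounting

open Polynomial

lemma mul_derivative_pow {R : Type*} [CommSemiring R] (p : R[X]) (n : ℕ) :
    p * derivative (p ^ n) = n * p ^ n * derivative p := by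
  cases n with
  | zero => simp
  | succ n => rw [derivative_pow_succ, map_add, C_eq_natCast, C_1]; push_cast; ring

lemma rootMultiplicity_eq_add_one_of_mul_derivative_eq {R : Type*} [CommRing R] [IsDomain R]
    {p a b r : R[X]} {z : R} (h : a * derivative p = b * p + r) (hr : r ≠ 0) (hp : p.IsRoot z)
    (ha : ¬ a.IsRoot z) (hrz : r.rootMultiplicity z ≤ 1) :
    p.rootMultiplicity z = r.rootMultiplicity z + 1 := by
  have hp₀ : p ≠ 0 := by
    rintro rfl
    exact hr (by simpa using h.symm)
  have upper : p.rootMultiplicity z - 1 ≤ r.rootMultiplicity z := by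
    rw [le_rootMultiplicity_iff hr, eq_sub_of_add_eq' h.symm]
    have dvd_p := pow_rootMultiplicity_dvd p z
    exact dvd_sub ((pow_sub_one_dvd_derivative_of_pow_dvd dvd_p).mul_left a)
      (((pow_dvd_pow _ (Nat.sub_le _ 1)).trans dvd_p).mul_left b)
  have lower : 0 < r.rootMultiplicity z → 1 < p.rootMultiplicity z := by
    intro hpos
    have hrz₀ : r.eval z = 0 := (rootMultiplicity_pos hr).1 hpos
    have key : a.eval z * (derivative p).eval z = 0 := by
      rw [← eval_mul, h, eval_add, eval_mul, hp.eq_zero, hrz₀, mul_zero, add_zero]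
    exact (one_lt_rootMultiplicity_iff_isRoot hp₀).2 ⟨hp, (mul_eq_zero.1 key).resolve_left ha⟩
  have pos : 0 < p.rootMultiplicity z := (rootMultiplicity_pos hp₀).2 hp
  lia

lemma card_toFinset_roots_add_sum_eq_natDegree {R : Type*} [CommRing R] [IsDomain R] [DecidableEq R]
    {p : R[X]} (hp : p.Splits) {m : R → ℕ} (hm : ∀ z ∈ p.roots, p.rootMultiplicity z = m z + 1) :
    p.roots.toFinset.card + ∑ z ∈ p.roots.toFinset, m z = p.natDegree := by
  calc p.roots.toFinset.card + ∑ z ∈ p.roots.toFinset, m z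
      = ∑ z ∈ p.roots.toFinset, (m z + 1) := by
        rw [Finset.sum_add_distrib, Finset.card_eq_sum_ones, add_comm]
    _ = ∑ z ∈ p.roots.toFinset, p.roots.count z :=
        Finset.sum_congr rfl fun z hz => by rw [count_roots, hm z (Multiset.mem_toFinset.1 hz)]
    _ = p.natDegree := by rw [Multiset.toFinset_sum_count_eq, hp.natDegree_eq_card_roots]

end RootCounting

section CircuitPotential

variable {K : Type*} [Field K]

/-- The one-dimensional circuit potential of the triple `(a₀, a₁, -(a₀ + a₁))`, in the affine
coordinate `z` of the pair of pants `K \ {0, -1}`; at its pole `-1` the value is junk. -/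
def circuitPotential (a₀ a₁ : ℕ) (z : K) : K :=
  (-1) ^ ((a₀ : ℤ) + a₁) * z ^ (a₀ : ℤ) * (z + 1) ^ (-((a₀ : ℤ) + a₁))

variable (K) in
/-- The number `a₀ ^ a₀ * a₁ ^ a₁ * a₂ ^ a₂` with `a₂ = -(a₀ + a₁)`: the critical value of the
circuit potential. -/
def circuitCriticalValue (a₀ a₁ : ℕ) : K :=
  (a₀ : K) ^ (a₀ : ℤ) * (a₁ : K) ^ (a₁ : ℤ) *
    ((-((a₀ : ℤ) + a₁) : ℤ) : K) ^ (-((a₀ : ℤ) + a₁))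

/-- The fiber over `w` of the circuit potential on the pair of pants `K \ {0, -1}`. -/
def circuitFiber (a₀ a₁ : ℕ) (w : K) : Set K :=
  {z | z ≠ 0 ∧ z ≠ -1 ∧ circuitPotential a₀ a₁ z = w}

lemma circuitPotential_eq_div (a₀ a₁ : ℕ) (z : K) :
    circuitPotential a₀ a₁ z = z ^ a₀ / (-(z + 1)) ^ (a₀ + a₁) := by
  rw [circuitPotential, ← Nat.cast_add, zpow_neg, zpow_natCast, zpow_natCast, zpow_natCast,
    neg_pow (z + 1), div_eq_mul_inv, mul_inv, ← inv_pow (-1 : K), inv_neg_one]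
  ring

variable (K) in
lemma circuitCriticalValue_eq_div (a₀ a₁ : ℕ) :
    circuitCriticalValue K a₀ a₁ = a₀ ^ a₀ * a₁ ^ a₁ / (-(a₀ + a₁ : K)) ^ (a₀ + a₁) := by
  rw [circuitCriticalValue, ← Nat.cast_add, zpow_neg, zpow_natCast, zpow_natCast, zpow_natCast,
    div_eq_mul_inv]
  push_cast
  rfl

lemma circuitCriticalValue_ne_zero {a₀ a₁ : ℕ} (h₀ : (a₀ : K) ≠ 0) (h₁ : (a₁ : K) ≠ 0)
    (h₂ : (a₀ + a₁ : K) ≠ 0) : circuitCriticalValue K a₀ a₁ ≠ 0 := by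
  rw [circuitCriticalValue_eq_div]
  exact div_ne_zero (mul_ne_zero (pow_ne_zero _ h₀) (pow_ne_zero _ h₁))
    (pow_ne_zero _ (neg_ne_zero.2 h₂))

lemma circuitPotential_div {a₀ a₁ : ℕ} (h₁ : (a₁ : K) ≠ 0) :
    circuitPotential a₀ a₁ (a₀ / a₁ : K) = circuitCriticalValue K a₀ a₁ := by
  have neg_add_one : -((a₀ : K) / a₁ + 1) = -(a₀ + a₁) / a₁ := by field_simp
  rw [circuitPotential_eq_div, circuitCriticalValue_eq_div, neg_add_one, div_pow, div_pow,
    div_div_div_eq, pow_add (a₁ : K), mul_left_comm, mul_div_mul_left _ _ (pow_ne_zero _ h₁)]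

lemma div_mem_circuitFiber_iff {a₀ a₁ : ℕ} (h₀ : (a₀ : K) ≠ 0) (h₁ : (a₁ : K) ≠ 0)
    (h₂ : (a₀ + a₁ : K) ≠ 0) {w : K} :
    (a₀ / a₁ : K) ∈ circuitFiber a₀ a₁ w ↔ w = circuitCriticalValue K a₀ a₁ := by
  have ne_neg_one : (a₀ / a₁ : K) ≠ -1 := by
    rwa [ne_eq, div_eq_iff h₁, neg_one_mul, eq_neg_iff_add_eq_zero]
  simp only [circuitFiber, Set.mem_ofPred_eq, circuitPotential_div h₁, ne_neg_one,
    div_ne_zero h₀ h₁, ne_eq, not_false_eq_true, true_and, eq_comm]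

open Polynomial

/-- The polynomial whose roots are the points of the fiber of the circuit potential over `w ≠ 0`,
obtained by clearing the denominator in `circuitPotential_eq_div`. -/
noncomputable def circuitPolynomial (a₀ a₁ : ℕ) (w : K) : K[X] :=
  C w * (-(X + 1)) ^ (a₀ + a₁) - X ^ a₀

lemma isRoot_circuitPolynomial {a₀ a₁ : ℕ} {w z : K} :
    (circuitPolynomial a₀ a₁ w).IsRoot z ↔ w * (-(z + 1)) ^ (a₀ + a₁) = z ^ a₀ := by
  simp [circuitPolynomial, sub_eq_zero]

lemma natDegree_circuitPolynomial {a₀ a₁ : ℕ} (h₁ : a₁ ≠ 0) {w : K} (hw : w ≠ 0) :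
    (circuitPolynomial a₀ a₁ w).natDegree = a₀ + a₁ := by
  have natDegree_left : (C w * (-(X + 1)) ^ (a₀ + a₁) : K[X]).natDegree = a₀ + a₁ := by
    rw [natDegree_C_mul hw, natDegree_pow, natDegree_neg, ← C_1, natDegree_X_add_C, mul_one]
  rw [circuitPolynomial, natDegree_sub_eq_left_of_natDegree_lt, natDegree_left]
  rw [natDegree_left, natDegree_X_pow]
  lia

lemma circuitPolynomial_ne_zero {a₀ a₁ : ℕ} (h₁ : a₁ ≠ 0) {w : K} (hw : w ≠ 0) :
    circuitPolynomial a₀ a₁ w ≠ 0 :=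
  ne_zero_of_natDegree_gt (n := 0) (by rw [natDegree_circuitPolynomial h₁ hw]; lia)

lemma circuitFiber_eq_setOfPred_isRoot {a₀ : ℕ} (h₀ : a₀ ≠ 0) (a₁ : ℕ) {w : K} (hw : w ≠ 0) :
    circuitFiber a₀ a₁ w = {z | (circuitPolynomial a₀ a₁ w).IsRoot z} := by
  ext z
  simp only [circuitFiber, Set.mem_ofPred_eq, isRoot_circuitPolynomial, circuitPotential_eq_div]
  have denom_ne_zero : z ≠ -1 → (-(z + 1)) ^ (a₀ + a₁) ≠ 0 := fun hz =>
    pow_ne_zero _ (neg_ne_zero.2 (mt eq_neg_of_add_eq_zero_left hz))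
  constructor
  · rintro ⟨-, hz₁, hz⟩
    exact ((div_eq_iff (denom_ne_zero hz₁)).1 hz).symm
  · intro hz
    have hz₀ : z ≠ 0 := by
      rintro rfl
      exact absurd hz (by simp [h₀, hw])
    have hz₁ : z ≠ -1 := by
      rintro rfl
      exact absurd hz.symm (by simp [h₀])
    exact ⟨hz₀, hz₁, (div_eq_iff (denom_ne_zero hz₁)).2 hz.symm⟩

lemma mul_derivative_circuitPolynomial (a₀ : ℕ) {a₁ : ℕ} (h₁ : (a₁ : K) ≠ 0) (w : K) :
    X * (X + 1) * derivative (circuitPolynomial a₀ a₁ w) =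
      C (a₀ + a₁ : K) * X * circuitPolynomial a₀ a₁ w +
        C (a₁ : K) * (X ^ a₀ * (X - C (a₀ / a₁ : K))) := by
  have hX := mul_derivative_pow (X : K[X]) a₀
  have hY := mul_derivative_pow (-(X + 1) : K[X]) (a₀ + a₁)
  have hC : (C (a₁ : K) * C (a₀ / a₁ : K) : K[X]) = C (a₀ : K) := by
    rw [← C_mul, mul_div_cancel₀ _ h₁]
  simp only [derivative_X, derivative_neg, derivative_add, derivative_one, Nat.cast_add] at hX hY
  simp only [circuitPolynomial, derivative_sub, derivative_C_mul, C_add, C_eq_natCast] at hC ⊢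
  linear_combination -(X + 1) * hX - C w * X * hY + X ^ a₀ * hC

lemma rootMultiplicity_circuitPolynomial [DecidableEq K] {a₀ a₁ : ℕ} (h₀ : a₀ ≠ 0)
    (h₁ : (a₁ : K) ≠ 0) {w z : K} (hw : w ≠ 0) (hz : (circuitPolynomial a₀ a₁ w).IsRoot z) :
    (circuitPolynomial a₀ a₁ w).rootMultiplicity z = (if z = a₀ / a₁ then 1 else 0) + 1 := by
  obtain ⟨hz₀, hz₁, -⟩ : z ∈ circuitFiber a₀ a₁ w := by
    rwa [circuitFiber_eq_setOfPred_isRoot h₀ a₁ hw]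
  have remainder_ne_zero : C (a₁ : K) * (X ^ a₀ * (X - C (a₀ / a₁ : K))) ≠ 0 :=
    mul_ne_zero (C_ne_zero.2 h₁) (mul_ne_zero (pow_ne_zero _ X_ne_zero) (X_sub_C_ne_zero _))
  have remainder_mult :
      (C (a₁ : K) * (X ^ a₀ * (X - C (a₀ / a₁ : K)))).rootMultiplicity z =
        if z = a₀ / a₁ then 1 else 0 := by
    have X_pow_mult : (X ^ a₀ : K[X]).rootMultiplicity z = 0 :=
      rootMultiplicity_eq_zero (by simp [hz₀])
    rw [rootMultiplicity_mul remainder_ne_zero, rootMultiplicity_C, zero_add,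
      rootMultiplicity_mul (right_ne_zero_of_mul remainder_ne_zero), X_pow_mult, zero_add,
      rootMultiplicity_X_sub_C]
  rw [← remainder_mult]
  refine rootMultiplicity_eq_add_one_of_mul_derivative_eq
    (mul_derivative_circuitPolynomial a₀ h₁ w) remainder_ne_zero hz ?_ ?_
  · simp [hz₀, add_eq_zero_iff_eq_neg, hz₁]
  · rw [remainder_mult]
    split_ifs <;> simp

lemma finite_circuitFiber {a₀ a₁ : ℕ} (h₀ : a₀ ≠ 0) (h₁ : a₁ ≠ 0) {w : K} (hw : w ≠ 0) :
    (circuitFiber a₀ a₁ w).Finite := by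
  rw [circuitFiber_eq_setOfPred_isRoot h₀ a₁ hw]
  exact finite_setOfPred_isRoot (circuitPolynomial_ne_zero h₁ hw)

lemma ncard_circuitFiber_add_ite [IsAlgClosed K] [DecidableEq K] {a₀ a₁ : ℕ} (h₀ : (a₀ : K) ≠ 0)
    (h₁ : (a₁ : K) ≠ 0) (h₂ : (a₀ + a₁ : K) ≠ 0) {w : K} (hw : w ≠ 0) :
    (circuitFiber a₀ a₁ w).ncard + (if w = circuitCriticalValue K a₀ a₁ then 1 else 0) =
      a₀ + a₁ := by
  have pos₀ : a₀ ≠ 0 := fun h => h₀ (by simp [h])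
  have pos₁ : a₁ ≠ 0 := fun h => h₁ (by simp [h])
  set p := circuitPolynomial a₀ a₁ w with hp
  have hp₀ : p ≠ 0 := circuitPolynomial_ne_zero pos₁ hw
  have fiber_eq : circuitFiber a₀ a₁ w = p.roots.toFinset := by
    rw [circuitFiber_eq_setOfPred_isRoot pos₀ a₁ hw]
    ext z
    simp [← hp, hp₀]
  have crit_mem : (a₀ / a₁ : K) ∈ p.roots.toFinset ↔ w = circuitCriticalValue K a₀ a₁ := by
    rw [← div_mem_circuitFiber_iff h₀ h₁ h₂, fiber_eq, Finset.mem_coe]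
  have card_roots := card_toFinset_roots_add_sum_eq_natDegree (IsAlgClosed.splits p)
    fun z hz => rootMultiplicity_circuitPolynomial pos₀ h₁ hw (isRoot_of_mem_roots hz)
  rw [Finset.sum_ite_eq', natDegree_circuitPolynomial pos₁ hw] at card_roots
  simpa only [fiber_eq, Set.ncard_coe_finset, crit_mem] using card_roots

end CircuitPotential

theorem statement3_general {K : Type*} [Field K] [IsAlgClosed K] {a₀ a₁ : ℕ}
    (h₀ : (a₀ : K) ≠ 0) (h₁ : (a₁ : K) ≠ 0) (h₂ : (a₀ + a₁ : K) ≠ 0) :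
    (∀ w : K, w ≠ 0 → w ≠ circuitCriticalValue K a₀ a₁ →
      (circuitFiber a₀ a₁ w).Finite ∧ (circuitFiber a₀ a₁ w).ncard = a₀ + a₁) ∧
    (circuitFiber a₀ a₁ (circuitCriticalValue K a₀ a₁)).Finite ∧
      (circuitFiber a₀ a₁ (circuitCriticalValue K a₀ a₁)).ncard = a₀ + a₁ - 1 := by
  classical
  have pos₀ : a₀ ≠ 0 := fun h => h₀ (by simp [h])
  have pos₁ : a₁ ≠ 0 := fun h => h₁ (by simp [h])
  have hq := circuitCriticalValue_ne_zero h₀ h₁ h₂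
  refine ⟨fun w hw hwq => ⟨finite_circuitFiber pos₀ pos₁ hw, ?_⟩,
    finite_circuitFiber pos₀ pos₁ hq, ?_⟩
  · simpa only [if_neg hwq, add_zero] using ncard_circuitFiber_add_ite h₀ h₁ h₂ hw
  · have card_add_one := ncard_circuitFiber_add_ite h₀ h₁ h₂ hq
    rw [if_pos rfl] at card_add_one
    exact Nat.eq_sub_of_add_eq card_add_one

/-- For positive integers `a₀, a₁` and `a₂ = -(a₀+a₁)`, let
`W z = (-1)^(a₀+a₁) * z^a₀ * (z+1)^a₂` (zpow) on `ℂ \ {0, -1}` and let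
`q = a₀^a₀ * a₁^a₁ * a₂^a₂` be the critical value.  For `w ≠ 0` with `w ≠ q` the fiber
`{z ∈ ℂ \ {0,-1} : W z = w}` has exactly `a₀ + a₁` elements, while the fiber over `q`
has exactly `a₀ + a₁ - 1` elements. -/
theorem statement3 (a₀ a₁ : ℕ) (h₀ : 0 < a₀) (h₁ : 0 < a₁) (a₂ : ℤ) (ha₂ : a₂ = -((a₀ : ℤ) + a₁))
    (W : ℂ → ℂ)
    (hW : W = fun z : ℂ => (-1 : ℂ) ^ ((a₀ : ℤ) + a₁) * z ^ (a₀ : ℤ) * (z + 1) ^ a₂)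
    (q : ℂ) (hq : q = (a₀ : ℂ) ^ (a₀ : ℤ) * (a₁ : ℂ) ^ (a₁ : ℤ) * (a₂ : ℂ) ^ a₂) :
    ∀ w : ℂ, w ≠ 0 →
      ((w ≠ q →
        {z : ℂ | z ≠ 0 ∧ z ≠ -1 ∧ W z = w}.Finite ∧
        {z : ℂ | z ≠ 0 ∧ z ≠ -1 ∧ W z = w}.ncard = a₀ + a₁) ∧
      ({z : ℂ | z ≠ 0 ∧ z ≠ -1 ∧ W z = q}.Finite ∧
        {z : ℂ | z ≠ 0 ∧ z ≠ -1 ∧ W z = q}.ncard = a₀ + a₁ - 1)) := by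
  subst ha₂ hW hq
  obtain ⟨generic, critical⟩ := statement3_general (K := ℂ) (a₀ := a₀) (a₁ := a₁)
    (mod_cast h₀.ne') (mod_cast h₁.ne') (mod_cast (Nat.add_pos_left h₀ a₁).ne')
  exact fun w hw => ⟨generic w hw, critical⟩
end

section
/- Let d ≥ 2 and let a = (a_0, …, a_{d+1}) ∈ ℤ^{d+2} be balanced nonzero with a_0 + a_1 ≠ 0, set b = (a_0 + a_1, a_2, …, a_{d+1}) ∈ ℤ^{d+1} and q_b = ∏_{i=0}^{d} b_i^{b_i} (zpow in ℂ). Define G : U → ℂ² by G(z) = (W(z), z_0/z_1). Then for every t ∈ ℂ with t ≠ 0 and every u ∈ ℂ, the following are equivalent: (1) there exists z ∈ U with W(z) = t, z_0/z_1 = u, and the restriction of DG(z) to T has rank at most 1; (2) u ≠ 0, u ≠ −1, and u^{a_0} · (u+1)^{−(a_0+a_1)} = t / q_b (zpow in ℂ). -/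
/-!
Clearing the nonzero factors `W z` and `z₀ / z₁` from the two components of `DG z`, the rank
condition says that `z` is a critical point of `W` relative to `z₀ / z₁`, i.e. along the hyperplane
`z₀ = u z₁`. Merging the first two coordinates, `y = (z₀ + z₁, z₂, …)`, identifies this
hyperplane section with the pair of pants one dimension lower, where
`W z = u ^ a₀ * (u + 1) ^ (-(a₀ + a₁)) * W_b y` and `W_b` is the potential of the circuit `b`.
By Lagrange multipliers `W_b` has exactly one critical point, `y = b / b_d`, with critical value
`q_b`.
-/

section Rank

variable {K V N : Type*} [Field K] [AddCommGroup V] [Module K V] [AddCommGroup N] [Module K N]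

theorem rank_map_prod_le_one_iff (T : Submodule K V) (f : V →ₗ[K] N) (g : V →ₗ[K] K)
    (hg : ∃ w ∈ T, g w ≠ 0) :
    Module.rank K (T.map (f.prod g)) ≤ 1 ↔ ∀ v ∈ T, g v = 0 → f v = 0 := by
  obtain ⟨w, hwT, hw⟩ := hg
  rw [rank_submodule_le_one_iff']
  constructor
  · rintro ⟨x, hx⟩ v hv hgv
    obtain ⟨s, hs⟩ := Submodule.mem_span_singleton.1 (hx (Submodule.mem_map_of_mem hwT))
    obtain ⟨r, hr⟩ := Submodule.mem_span_singleton.1 (hx (Submodule.mem_map_of_mem hv))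
    have hx₂ : x.2 ≠ 0 := right_ne_zero_of_mul ((congrArg Prod.snd hs).trans_ne hw)
    have hr₀ : r = 0 := (mul_eq_zero.1 ((congrArg Prod.snd hr).trans hgv)).resolve_right hx₂
    simpa [hr₀] using (congrArg Prod.fst hr).symm
  · refine fun h => ⟨(f w, g w), ?_⟩
    rintro _ ⟨v, hv, rfl⟩
    refine Submodule.mem_span_singleton.2 ⟨g v / g w, Prod.ext ?_ (div_mul_cancel₀ _ hw)⟩
    have hker := h (v - (g v / g w) • w) (T.sub_mem hv (T.smul_mem _ hwT)) (by simp [hw])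
    rw [map_sub, map_smul, sub_eq_zero] at hker
    exact hker.symm

end Rank

theorem prod_zpow_eq_zpow_sum {G₀ ι : Type*} [CommGroupWithZero G₀] {c : G₀} (hc : c ≠ 0)
    (s : Finset ι) (e : ι → ℤ) : ∏ k ∈ s, c ^ e k = c ^ ∑ k ∈ s, e k := by
  classical
  induction s using Finset.induction_on with
  | empty => simp
  | insert k s hk ih => rw [Finset.prod_insert hk, Finset.sum_insert hk, zpow_add₀ hc, ih]

section Potential

variable {K ι : Type*} [Field K] [Fintype ι]

/-- The potential `∏ k, z k ^ e k` with integer exponents `e`. -/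
def laurentMonomial (e : ι → ℤ) (z : ι → K) : K :=
  ∏ k, z k ^ e k

/-- The logarithmic differential `∑ k, w k * v k / z k` at `z`, in the direction `v`, of the
potential with exponents `w`. The exponents are taken in the field, since only their images there
matter to first order. -/
def logDifferential (w z v : ι → K) : K :=
  ∑ k, w k * v k / z k

/-- Criticality of the potential with exponents `w` at the point `y` of an affine hyperplane
`∑ k, y k = const`. -/
def IsLogCritical (w y : ι → K) : Prop :=
  ∀ v, ∑ k, v k = 0 → logDifferential w y v = 0

theorem laurentMonomial_ne_zero (e : ι → ℤ) {z : ι → K} (hz : ∀ k, z k ≠ 0) :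
    laurentMonomial e z ≠ 0 :=
  Finset.prod_ne_zero_iff.2 fun k _ => zpow_ne_zero _ (hz k)

theorem isLogCritical_iff_sum_smul_eq {w y : ι → K} (hy : ∀ k, y k ≠ 0) (hsum : ∑ k, y k ≠ 0) :
    IsLogCritical w y ↔ (∑ k, y k) • w = (∑ k, w k) • y := by
  classical
  constructor
  · intro h
    have proportional : ∀ k l, w k * y l = w l * y k := fun k l => by
      have hkl := h (Pi.single k 1 - Pi.single l 1) (by simp)
      simp only [logDifferential, Pi.sub_apply, mul_sub, sub_div, Finset.sum_sub_distrib,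
        Pi.single_apply, mul_ite, mul_one, mul_zero, ite_div, zero_div, Finset.sum_ite_eq',
        Finset.mem_univ, if_true, sub_eq_zero] at hkl
      exact (div_eq_div_iff (hy k) (hy l)).1 hkl
    ext k
    simp only [Pi.smul_apply, smul_eq_mul, Finset.sum_mul]
    exact Finset.sum_congr rfl fun l _ => by rw [mul_comm, proportional]
  · intro h v hv
    have hterm : ∀ k, w k * v k / y k = (∑ l, w l) / (∑ l, y l) * v k := fun k => by
      have hk : (∑ l, y l) * w k = (∑ l, w l) * y k := congrFun h k
      have := hy k
      field_simp
      linear_combination v k * hk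
    simp only [logDifferential, hterm, ← Finset.mul_sum, hv, mul_zero]

theorem laurentMonomial_div_last {n : ℕ} {b : Fin (n + 1) → ℤ} (hb : ∑ i, b i = 0)
    (hlast : (b (Fin.last n) : K) ≠ 0) :
    laurentMonomial (fun k : Fin n => b k.castSucc)
        (fun k => (b k.castSucc : K) / (b (Fin.last n) : K)) =
      laurentMonomial b fun i => (b i : K) := by
  have hsum : ∑ k : Fin n, b k.castSucc = -b (Fin.last n) := by
    rw [Fin.sum_univ_castSucc] at hb
    exact eq_neg_of_add_eq_zero_left hb
  simp only [laurentMonomial, div_zpow, Finset.prod_div_distrib, prod_zpow_eq_zpow_sum hlast, hsum,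
    zpow_neg, div_inv_eq_mul, Fin.prod_univ_castSucc]

end Potential

section MergeHead

variable {M : Type*} [Add M] {n : ℕ}

/-- The vector `(v₀ + v₁, v₂, …)`: the coordinates of the lower-dimensional pair of pants, and also
the passage from the circuit `a` to the circuit `b`. -/
def mergeHead (v : Fin (n + 2) → M) : Fin (n + 1) → M :=
  Fin.cons (v 0 + v 1) fun k => v k.succ.succ

@[simp]
theorem mergeHead_zero (v : Fin (n + 2) → M) : mergeHead v 0 = v 0 + v 1 := rfl

@[simp]
theorem mergeHead_succ (v : Fin (n + 2) → M) (k : Fin n) : mergeHead v k.succ = v k.succ.succ := rfl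

theorem sum_mergeHead {A : Type*} [AddCommMonoid A] (v : Fin (n + 2) → A) :
    ∑ k, mergeHead v k = ∑ k, v k := by
  simp [Fin.sum_univ_succ, add_assoc]

theorem mergeHead_castSucc (v : Fin (n + 3) → M) (k : Fin (n + 1)) :
    mergeHead v k.castSucc = mergeHead (fun i => v i.castSucc) k := by
  cases k using Fin.cases <;> rfl

theorem mergeHead_intCast {R : Type*} [AddGroupWithOne R] (e : Fin (n + 2) → ℤ) (k : Fin (n + 1)) :
    ((mergeHead e k : ℤ) : R) = mergeHead (fun i => (e i : R)) k := by
  cases k using Fin.cases <;> simp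

end MergeHead

section SplitHead

variable {K : Type*} [Field K] {n : ℕ} {u : K}

/-- The vector on the hyperplane `z₀ = u * z₁` that merges to `y`; this inverts `mergeHead` when
`u + 1 ≠ 0`. -/
def splitHead (u : K) (y : Fin (n + 1) → K) : Fin (n + 2) → K :=
  Fin.cons (u / (u + 1) * y 0) (Fin.cons (1 / (u + 1) * y 0) fun k => y k.succ)

@[simp]
theorem splitHead_zero (y : Fin (n + 1) → K) : splitHead u y 0 = u / (u + 1) * y 0 := rfl

@[simp]
theorem splitHead_one (y : Fin (n + 1) → K) : splitHead u y 1 = 1 / (u + 1) * y 0 := rfl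

@[simp]
theorem splitHead_succ_succ (y : Fin (n + 1) → K) (k : Fin n) :
    splitHead u y k.succ.succ = y k.succ := rfl

theorem mergeHead_splitHead (hu : u + 1 ≠ 0) (y : Fin (n + 1) → K) :
    mergeHead (splitHead u y) = y := by
  ext k
  cases k using Fin.cases with
  | zero =>
    simp only [mergeHead_zero, splitHead_zero, splitHead_one]
    field_simp
  | succ k => rfl

theorem splitHead_mergeHead (hu : u + 1 ≠ 0) {z : Fin (n + 2) → K} (hz : z 0 = u * z 1) :
    splitHead u (mergeHead z) = z := by
  ext k
  refine Fin.cases ?_ (Fin.cases ?_ fun k => rfl) k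
  · simp only [splitHead_zero, mergeHead_zero, hz]
    field_simp
  · simp only [Fin.succ_zero_eq_one, splitHead_one, mergeHead_zero, hz]
    field_simp

theorem sum_splitHead (hu : u + 1 ≠ 0) (y : Fin (n + 1) → K) :
    ∑ k, splitHead u y k = ∑ k, y k := by
  rw [← sum_mergeHead, mergeHead_splitHead hu]

theorem splitHead_ne_zero (hu₀ : u ≠ 0) (hu₁ : u + 1 ≠ 0) {y : Fin (n + 1) → K}
    (hy : ∀ k, y k ≠ 0) (k : Fin (n + 2)) : splitHead u y k ≠ 0 :=
  Fin.cases (mul_ne_zero (div_ne_zero hu₀ hu₁) (hy 0))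
    (Fin.cases (mul_ne_zero (one_div_ne_zero hu₁) (hy 0)) fun k => hy k.succ) k

theorem splitHead_zero_div_one (hu : u + 1 ≠ 0) {y : Fin (n + 1) → K} (hy : y 0 ≠ 0) :
    splitHead u y 0 / splitHead u y 1 = u := by
  simp only [splitHead_zero, splitHead_one]
  field_simp

theorem logDifferential_splitHead (hu₀ : u ≠ 0) (hu₁ : u + 1 ≠ 0) (w : Fin (n + 2) → K)
    (y v : Fin (n + 1) → K) :
    logDifferential w (splitHead u y) (splitHead u v) = logDifferential (mergeHead w) y v := by
  simp only [logDifferential, Fin.sum_univ_succ, Fin.succ_zero_eq_one, splitHead_zero,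
    splitHead_one, splitHead_succ_succ, mergeHead_zero, mergeHead_succ, mul_left_comm (w _),
    mul_div_mul_left _ _ (div_ne_zero hu₀ hu₁), mul_div_mul_left _ _ (one_div_ne_zero hu₁)]
  ring

theorem laurentMonomial_splitHead (hu : u + 1 ≠ 0) (e : Fin (n + 2) → ℤ)
    {y : Fin (n + 1) → K} (hy : y 0 ≠ 0) :
    laurentMonomial e (splitHead u y) =
      u ^ e 0 * (u + 1) ^ (-(e 0 + e 1)) * laurentMonomial (mergeHead e) y := by
  simp only [laurentMonomial, Fin.prod_univ_succ, Fin.succ_zero_eq_one, splitHead_zero,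
    splitHead_one, splitHead_succ_succ, mergeHead_zero, mergeHead_succ, mul_zpow, div_zpow,
    one_zpow, zpow_neg, zpow_add₀ hu, zpow_add₀ hy]
  field_simp

theorem laurentMonomial_splitHead_div_last (hu : u + 1 ≠ 0) {a : Fin (n + 3) → ℤ}
    (ha : ∑ i, a i = 0) (hhead : ((mergeHead a 0 : ℤ) : K) ≠ 0)
    (hlast : (a (Fin.last (n + 2)) : K) ≠ 0) :
    laurentMonomial (fun i => a i.castSucc)
        (splitHead u fun k : Fin (n + 1) =>
          ((mergeHead a k.castSucc : ℤ) : K) / a (Fin.last (n + 2))) =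
      u ^ a 0 * (u + 1) ^ (-(a 0 + a 1)) *
        laurentMonomial (mergeHead a) fun i => ((mergeHead a i : ℤ) : K) := by
  rw [laurentMonomial_splitHead hu _ (div_ne_zero hhead hlast),
    ← laurentMonomial_div_last ((sum_mergeHead a).trans ha) hlast]
  simp only [mergeHead_castSucc]
  rfl

end SplitHead

section RatioCritical

variable {K : Type*} [Field K] {n : ℕ}

/-- Criticality at `z` of the potential with exponents `w` relative to `z₀ / z₁`: the logarithmic
differential vanishes on the directions tangent to `∑ k, z k = const` that keep `z₀ / z₁` constant
to first order. -/
def IsRatioCritical (w z : Fin (n + 2) → K) : Prop :=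
  ∀ v, ∑ k, v k = 0 → v 0 / z 0 = v 1 / z 1 → logDifferential w z v = 0

theorem IsRatioCritical.add_ne_zero {w z : Fin (n + 2) → K} (h : IsRatioCritical w z)
    (hw : w 0 + w 1 ≠ 0) (hz₀ : z 0 ≠ 0) (hz₁ : z 1 ≠ 0) : z 0 + z 1 ≠ 0 := by
  intro hadd
  have hcrit := h (Fin.cons (z 0) (Fin.cons (z 1) 0))
  simp only [logDifferential, Fin.sum_univ_succ, Fin.succ_zero_eq_one, Fin.cons_zero,
    Fin.cons_one, Fin.cons_succ, Pi.zero_apply, Finset.sum_const_zero, mul_zero, zero_div,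
    add_zero, mul_div_cancel_right₀ _ hz₀, mul_div_cancel_right₀ _ hz₁] at hcrit
  exact hw (hcrit hadd (by rw [div_self hz₀, div_self hz₁]))

theorem isRatioCritical_splitHead_iff {u : K} (hu₀ : u ≠ 0) (hu₁ : u + 1 ≠ 0)
    {w : Fin (n + 2) → K} {y : Fin (n + 1) → K} (hy : y 0 ≠ 0) :
    IsRatioCritical w (splitHead u y) ↔ IsLogCritical (mergeHead w) y := by
  constructor
  · intro h v hv
    rw [← logDifferential_splitHead hu₀ hu₁]
    refine h _ ((sum_splitHead hu₁ v).trans hv) ?_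
    simp only [splitHead_zero, splitHead_one, mul_div_mul_left _ _ (div_ne_zero hu₀ hu₁),
      mul_div_mul_left _ _ (one_div_ne_zero hu₁)]
  · intro h v hv hratio
    have hv₀ : v 0 = u * v 1 := by
      simp only [splitHead_zero, splitHead_one] at hratio
      field_simp at hratio
      exact hratio
    rw [← splitHead_mergeHead hu₁ hv₀, logDifferential_splitHead hu₀ hu₁]
    exact h _ ((sum_mergeHead v).trans hv)

theorem isRatioCritical_iff_eq_splitHead {w : Fin (n + 2) → K} (hw : ∀ k, mergeHead w k ≠ 0)
    {c : K} (hc : c ≠ 0) (hwc : ∑ k, w k + c = 0) (u : K) (z : Fin (n + 2) → K) :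
    ((∀ k, z k ≠ 0) ∧ ∑ k, z k = -1 ∧ z 0 / z 1 = u ∧ IsRatioCritical w z) ↔
      u ≠ 0 ∧ u + 1 ≠ 0 ∧ z = splitHead u fun k => mergeHead w k / c := by
  have hsum : ∑ k, mergeHead w k = -c := (sum_mergeHead w).trans (eq_neg_of_add_eq_zero_left hwc)
  constructor
  · rintro ⟨hz, hz_sum, rfl, hcrit⟩
    have hadd := hcrit.add_ne_zero (hw 0) (hz 0) (hz 1)
    have hu₀ : z 0 / z 1 ≠ 0 := div_ne_zero (hz 0) (hz 1)
    have hu₁ : z 0 / z 1 + 1 ≠ 0 := by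
      rw [div_add_one (hz 1)]
      exact div_ne_zero hadd (hz 1)
    have hsplit := splitHead_mergeHead hu₁ (div_mul_cancel₀ (z 0) (hz 1)).symm
    have hy : ∀ k, mergeHead z k ≠ 0 := Fin.cases hadd fun k => hz k.succ.succ
    have hy_sum : ∑ k, mergeHead z k = -1 := (sum_mergeHead z).trans hz_sum
    rw [← hsplit, isRatioCritical_splitHead_iff hu₀ hu₁ hadd,
      isLogCritical_iff_sum_smul_eq hy (by simp [hy_sum]), hy_sum, hsum] at hcrit
    have hy_eq : mergeHead z = fun k => mergeHead w k / c := by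
      ext k
      have hk : -1 * mergeHead w k = -c * mergeHead z k := congrFun hcrit k
      rw [eq_div_iff hc]
      linear_combination hk
    exact ⟨hu₀, hu₁, by rw [← hy_eq, hsplit]⟩
  · rintro ⟨hu₀, hu₁, rfl⟩
    have hy : ∀ k, mergeHead w k / c ≠ 0 := fun k => div_ne_zero (hw k) hc
    have hy_sum : ∑ k, mergeHead w k / c = -1 := by
      rw [← Finset.sum_div, hsum, neg_div, div_self hc]
    refine ⟨splitHead_ne_zero hu₀ hu₁ hy, (sum_splitHead hu₁ _).trans hy_sum,
      splitHead_zero_div_one hu₁ (hy 0), ?_⟩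
    rw [isRatioCritical_splitHead_iff hu₀ hu₁ (hy 0), isLogCritical_iff_sum_smul_eq hy
      (by simp [hy_sum]), hy_sum, hsum]
    ext k
    simp [mul_div_cancel₀ _ hc]

end RatioCritical

section Derivative

variable {𝕜 ι : Type*} [NontriviallyNormedField 𝕜]

theorem hasFDerivAt_laurentMonomial [Fintype ι] (e : ι → ℤ) {z : ι → 𝕜} (hz : ∀ k, z k ≠ 0) :
    HasFDerivAt (laurentMonomial e)
      (laurentMonomial e z •
        ∑ k, ((e k : 𝕜) / z k) • ContinuousLinearMap.proj (R := 𝕜) (φ := fun _ : ι => 𝕜) k) z := by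
  classical
  have hfactor : ∀ k, HasFDerivAt (fun x : ι → 𝕜 => x k ^ e k) _ z := fun k =>
    (hasDerivAt_zpow (e k) (z k) (Or.inl (hz k))).comp_hasFDerivAt z
      (hasFDerivAt_apply (𝕜 := 𝕜) (F' := fun _ => 𝕜) k z)
  refine (HasFDerivAt.finsetProd (u := Finset.univ) fun k _ => hfactor k).congr_fderiv ?_
  rw [Finset.smul_sum]
  refine Finset.sum_congr rfl fun k _ => ?_
  rw [smul_smul, smul_smul, laurentMonomial, ← Finset.mul_prod_erase _ _ (Finset.mem_univ k),
    zpow_sub_one₀ (hz k)]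
  congr 1
  ring

theorem hasFDerivAt_apply_div_apply [Finite ι] (i j : ι) {z : ι → 𝕜} (hi : z i ≠ 0) (hj : z j ≠ 0) :
    HasFDerivAt (fun x : ι → 𝕜 => x i / x j)
      ((z i / z j) • ((z i)⁻¹ • ContinuousLinearMap.proj (R := 𝕜) (φ := fun _ : ι => 𝕜) i -
        (z j)⁻¹ • ContinuousLinearMap.proj (R := 𝕜) (φ := fun _ : ι => 𝕜) j)) z := by
  have := Fintype.ofFinite ι
  have hinv := (hasDerivAt_inv hj).comp_hasFDerivAt z (hasFDerivAt_apply (𝕜 := 𝕜) j z)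
  have hmul := (hasFDerivAt_apply (𝕜 := 𝕜) i z).fun_mul hinv
  simp only [Function.comp_apply, ← div_eq_mul_inv] at hmul
  refine hmul.congr_fderiv ?_
  ext v
  simp only [add_apply, smul_apply, ContinuousLinearMap.proj_apply, smul_eq_mul, neg_mul, mul_neg,
    sub_apply]
  field_simp
  ring

theorem rank_map_fderiv_le_one_iff_isRatioCritical {n : ℕ} (e : Fin (n + 2) → ℤ)
    {z : Fin (n + 2) → 𝕜} (hz : ∀ k, z k ≠ 0) (hsum : ∑ k, z k ≠ 0)
    {T : Submodule 𝕜 (Fin (n + 2) → 𝕜)} (hT : ∀ v, v ∈ T ↔ ∑ k, v k = 0) :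
    Module.rank 𝕜 (T.map
      (fderiv 𝕜 (fun x : Fin (n + 2) → 𝕜 => (laurentMonomial e x, x 0 / x 1)) z).toLinearMap) ≤ 1 ↔
      IsRatioCritical (fun k => (e k : 𝕜)) z := by
  have hW := hasFDerivAt_laurentMonomial e hz
  have hratio := hasFDerivAt_apply_div_apply (𝕜 := 𝕜) 0 1 (hz 0) (hz 1)
  -- The radial vector `z`, corrected along the first axis, is tangent and changes `z₀ / z₁`.
  have htransverse : z - Pi.single 0 (∑ k, z k) ∈ T := (hT _).2 (by simp)
  rw [(hW.prodMk hratio).fderiv]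
  refine (rank_map_prod_le_one_iff T _ _ ⟨_, htransverse, ?_⟩).trans ?_
  · have hz₀ := hz 0
    have hz₁ := hz 1
    simpa [mul_sub, hz₀, hz₁] using hsum
  · have hW_apply : ∀ v, (laurentMonomial e z • ∑ k, ((e k : 𝕜) / z k) •
        ContinuousLinearMap.proj (R := 𝕜) (φ := fun _ => 𝕜) k) v =
        laurentMonomial e z * logDifferential (fun k => (e k : 𝕜)) z v := fun v => by
      simp [logDifferential, div_mul_eq_mul_div]
    simp only [ContinuousLinearMap.coe_coe, hW_apply, mul_eq_zero,
      laurentMonomial_ne_zero e hz, false_or]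
    simp [IsRatioCritical, hT, hz, sub_eq_zero, div_eq_inv_mul]

end Derivative

theorem statement11_general {𝕜 : Type*} [NontriviallyNormedField 𝕜] {n : ℕ} (a : Fin (n + 3) → ℤ)
    (hbal : ∑ i, a i = 0) (hb : ∀ i, ((mergeHead a i : ℤ) : 𝕜) ≠ 0)
    (T : Submodule 𝕜 (Fin (n + 2) → 𝕜)) (hT : ∀ v, v ∈ T ↔ ∑ i, v i = 0) (t u : 𝕜) :
    (∃ z : Fin (n + 2) → 𝕜, (∀ i, z i ≠ 0) ∧ ∑ i, z i = -1 ∧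
        laurentMonomial (fun i => a i.castSucc) z = t ∧ z 0 / z 1 = u ∧
        Module.rank 𝕜 (T.map (fderiv 𝕜 (fun x : Fin (n + 2) → 𝕜 =>
          (laurentMonomial (fun i => a i.castSucc) x, x 0 / x 1)) z).toLinearMap) ≤ 1) ↔
      (u ≠ 0 ∧ u ≠ -1 ∧ u ^ a 0 * (u + 1) ^ (-(a 0 + a 1)) =
        t / laurentMonomial (mergeHead a) fun i => ((mergeHead a i : ℤ) : 𝕜)) := by
  have hc : (a (Fin.last (n + 2)) : 𝕜) ≠ 0 := hb (Fin.last (n + 1))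
  have hwc : ∑ i : Fin (n + 2), (a i.castSucc : 𝕜) + a (Fin.last (n + 2)) = 0 := by
    rw [Fin.sum_univ_castSucc] at hbal
    simpa using congrArg (Int.cast (R := 𝕜)) hbal
  have hw : ∀ k : Fin (n + 1), mergeHead (fun i => (a i.castSucc : 𝕜)) k =
      (mergeHead a k.castSucc : ℤ) := fun k => by rw [mergeHead_castSucc, mergeHead_intCast]
  have critical_iff := isRatioCritical_iff_eq_splitHead (fun k => (hw k).trans_ne (hb _)) hc hwc u
  simp only [hw] at critical_iff
  have rank_iff {z : Fin (n + 2) → 𝕜} (hz : ∀ i, z i ≠ 0) (hsum : ∑ i, z i = -1) :=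
    rank_map_fderiv_le_one_iff_isRatioCritical (fun i => a i.castSucc) hz
      (hsum.trans_ne (neg_ne_zero.2 one_ne_zero)) hT
  have value := fun hu => laurentMonomial_splitHead_div_last (u := u) hu hbal (hb 0) hc
  have hq := laurentMonomial_ne_zero (mergeHead a) hb
  constructor
  · rintro ⟨z, hz, hsum, rfl, hzu, hrank⟩
    obtain ⟨hu₀, hu₁, rfl⟩ :=
      (critical_iff z).1 ⟨hz, hsum, hzu, (rank_iff hz hsum).1 hrank⟩
    exact ⟨hu₀, mt eq_neg_iff_add_eq_zero.1 hu₁, by rw [value hu₁, mul_div_cancel_right₀ _ hq]⟩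
  · rintro ⟨hu₀, hu₁, ht⟩
    replace hu₁ := mt eq_neg_iff_add_eq_zero.2 hu₁
    obtain ⟨hz, hsum, hzu, hcrit⟩ := (critical_iff _).2 ⟨hu₀, hu₁, rfl⟩
    exact ⟨_, hz, hsum, by rw [value hu₁, ht, div_mul_cancel₀ _ hq], hzu,
      (rank_iff hz hsum).2 hcrit⟩

/-- Let `a ∈ ℤ^{d+2}` (`d ≥ 2`) be balanced nonzero with `a₀ + a₁ ≠ 0`,
`b = (a₀+a₁, a₂, …, a_{d+1})`, `q_b = ∏ bᵢ^{bᵢ}` (zpow) and `G = (W, z₀/z₁)` on the affine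
chart `U`.  For `t ≠ 0` and `u ∈ ℂ`, there exists `z ∈ U` with `W z = t`, `z₀/z₁ = u`
and `DG(z)|_T` of rank at most `1` iff `u ≠ 0`, `u ≠ -1` and
`u^{a₀} (u+1)^{-(a₀+a₁)} = t / q_b` (zpow). -/
theorem statement11 (d : ℕ) (hd : 2 ≤ d) (a : Fin (d + 2) → ℤ)
    (hne : ∀ i, a i ≠ 0) (hbal : ∑ i, a i = 0) (h01 : a 0 + a 1 ≠ 0)
    (b : Fin (d + 1) → ℤ) (hb : b = Fin.cons (a 0 + a 1) (fun i : Fin d => a i.succ.succ))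
    (qb : ℂ) (hqb : qb = ∏ i : Fin (d + 1), (b i : ℂ) ^ b i)
    (W : (Fin (d + 1) → ℂ) → ℂ)
    (hW : W = fun z => ∏ i : Fin (d + 1), z i ^ a i.castSucc)
    (G : (Fin (d + 1) → ℂ) → ℂ × ℂ) (hG : G = fun z => (W z, z 0 / z 1))
    (T : Submodule ℂ (Fin (d + 1) → ℂ))
    (hT : (T : Set (Fin (d + 1) → ℂ)) = {v | ∑ i, v i = 0})
    (t : ℂ) (ht : t ≠ 0) (u : ℂ) :
    (∃ z : Fin (d + 1) → ℂ, (∀ i, z i ≠ 0) ∧ ∑ i, z i = -1 ∧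
        W z = t ∧ z 0 / z 1 = u ∧
        Module.rank ℂ ↥(T.map (fderiv ℂ G z).toLinearMap) ≤ 1) ↔
      (u ≠ 0 ∧ u ≠ -1 ∧ u ^ (a 0) * (u + 1) ^ (-(a 0 + a 1)) = t / qb) := by
  obtain ⟨n, rfl⟩ : ∃ n, d = n + 1 := ⟨d - 1, by omega⟩
  have hb' : ∀ i, ((mergeHead a i : ℤ) : ℂ) ≠ 0 := fun i =>
    Int.cast_ne_zero.2 (Fin.cases h01 (fun k => hne k.succ.succ) i)
  subst hG hW hqb hb
  exact statement11_general a hbal hb' T (Set.ext_iff.1 hT) t u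
end
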